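/- Fix N, n ∈ ℕ with 2n < N, let y ∈ ℝ^{N−2n} have strictly increasing coordinates, and let L_1 < L_2 be indices with L_1 + 1 ≤ N − 2n and L_2 − n ≥ 1, L_2 − n + 1 ≤ N − 2n. Set I_1 = [y_{L_1}, y_{L_1+1}] and I_2 = [y_{L_2−n}, y_{L_2−n+1}], assume both are nondegenerate of length at most ℓ and that dist(I_1, I_2) ≥ d > 0. Fix z⁽¹⁾ ∈ (I_1^n)↑ and z⁽²⁾ ∈ (I_2^n)↑. Let μ_y be the probability measure on (I_1^n)↑ × (I_2^n)↑ with density proportional to e^{−H_y(x)} with respect to Lebesgue measure, let μ¹ be the probability measure on (I_1^n)↑ with density proportional to e^{−H¹_{y,z⁽²⁾}(w)}, and let μ² be the probability measure on (I_2^n)↑ with density proportional to e^{−H²_{y,z⁽¹⁾}(w)}. Then ‖μ_y − μ¹ ⊗ μ²‖_TV ≤ exp(12 n² ℓ / d) − 1. -/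

import Mathlib

noncomputable section

/-- The two-cluster Hamiltonian `H_y(x)` for `x = (x⁽¹⁾, x⁽²⁾) ∈ ℝⁿ × ℝⁿ` and external
configuration `y ∈ ℝ^{N−2n}`. -/
def twoClusterHam (N n : ℕ) (y : Fin (N - 2 * n) → ℝ)
    (x : (Fin n → ℝ) × (Fin n → ℝ)) : ℝ :=
  (N : ℝ) * ((1 / 2) * ∑ i, ((x.1 i) ^ 2 + (x.2 i) ^ 2)
    - (1 / N) * ∑ i, ∑ j ∈ Finset.Ioi i, Real.log ((x.1 i - x.1 j) ^ 2)
    - (1 / N) * ∑ i, ∑ j ∈ Finset.Ioi i, Real.log ((x.2 i - x.2 j) ^ 2)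
    - (1 / N) * ∑ i, ∑ j, Real.log ((x.1 i - x.2 j) ^ 2)
    - (1 / N) * ∑ k, ∑ i, (Real.log ((x.1 i - y k) ^ 2) + Real.log ((x.2 i - y k) ^ 2)))

/-- The one-cluster Hamiltonian `H¹_{y,z}(w)` (and `H²_{y,z}`, given by the same formula). -/
def oneClusterHam (N n : ℕ) (y : Fin (N - 2 * n) → ℝ) (z : Fin n → ℝ)
    (w : Fin n → ℝ) : ℝ :=
  (N : ℝ) * ((1 / 2) * ∑ i, (w i) ^ 2
    - (1 / N) * ∑ i, ∑ j ∈ Finset.Ioi i, Real.log ((w i - w j) ^ 2)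
    - (1 / N) * ∑ k, ∑ i, Real.log ((w i - y k) ^ 2)
    - (1 / N) * ∑ k : Fin n, ∑ i, Real.log ((w i - z k) ^ 2))

/-- The coupling remainder `R_z(x)`. -/
def couplingR (n : ℕ) (z x : (Fin n → ℝ) × (Fin n → ℝ)) : ℝ :=
  (∑ i, ∑ k, (Real.log ((x.1 i - z.2 k) ^ 2) + Real.log ((x.2 i - z.1 k) ^ 2)))
    - ∑ i, ∑ j, Real.log ((x.1 i - x.2 j) ^ 2)

open MeasureTheory

/-!
The two-cluster Hamiltonian is the sum of the two one-cluster Hamiltonians and the remainder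
`couplingR`, so `μ_y` is the exponential tilt of `μ¹ ⊗ μ²` by `-couplingR`. Every term of
`couplingR` is the logarithm of a squared distance between a point of `I₁` and a point of `I₂`.
The logarithm is `1 / d`-Lipschitz at distance at least `d` from `0`, and the points move by at most
`ℓ`, so `couplingR` oscillates by at most `8n²ℓ/d`. Tilting a probability measure by a function
of oscillation `C` multiplies its density by a factor in `[exp (-C), exp C]`, and hence moves
it by at most `exp C - 1` in total variation.
-/

section Tilted

variable {α β : Type*} [MeasurableSpace α] [MeasurableSpace β]

lemma abs_exp_div_integral_exp_sub_one_le {ν : Measure α} [IsProbabilityMeasure ν] {h : α → ℝ}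
    (hh : AEMeasurable h ν) {C : ℝ} {x : α} (hx : ∀ᵐ y ∂ν, |h x - h y| ≤ C) :
    |Real.exp (h x) / ∫ y, Real.exp (h y) ∂ν - 1| ≤ Real.exp C - 1 := by
  have hle : ∀ᵐ y ∂ν, Real.exp (h y) ≤ Real.exp (h x + C) := by
    filter_upwards [hx] with y hy
    exact Real.exp_le_exp.2 (by linarith [(abs_le.1 hy).1])
  have hge : ∀ᵐ y ∂ν, Real.exp (h x - C) ≤ Real.exp (h y) := by
    filter_upwards [hx] with y hy
    exact Real.exp_le_exp.2 (by linarith [(abs_le.1 hy).2])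
  have hint : Integrable (fun y ↦ Real.exp (h y)) ν := by
    refine (integrable_const (Real.exp (h x + C))).mono' hh.exp.aestronglyMeasurable ?_
    simpa only [Real.norm_eq_abs, Real.abs_exp] using hle
  have hupper : ∫ y, Real.exp (h y) ∂ν ≤ Real.exp (h x + C) := by
    simpa using integral_mono_ae hint (integrable_const _) hle
  have hlower : Real.exp (h x - C) ≤ ∫ y, Real.exp (h y) ∂ν := by
    simpa using integral_mono_ae (integrable_const _) hint hge
  have hpos := integral_exp_pos hint
  have hratio_le : Real.exp (h x) / ∫ y, Real.exp (h y) ∂ν ≤ Real.exp C := by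
    rwa [div_le_iff₀ hpos, ← div_le_iff₀' (Real.exp_pos C), ← Real.exp_sub]
  have hratio_ge : Real.exp (-C) ≤ Real.exp (h x) / ∫ y, Real.exp (h y) ∂ν := by
    rwa [le_div_iff₀ hpos, ← le_div_iff₀' (Real.exp_pos _), ← Real.exp_sub, sub_neg_eq_add]
  rw [abs_le]
  constructor <;> linarith [Real.add_one_le_exp C, Real.add_one_le_exp (-C)]

lemma abs_real_tilted_sub_real_le {ν : Measure α} [IsProbabilityMeasure ν] {h : α → ℝ}
    (hh : AEMeasurable h ν) {C : ℝ} (hosc : ∀ᵐ x ∂ν, ∀ᵐ y ∂ν, |h x - h y| ≤ C) (A : Set α) :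
    |(ν.tilted h).real A - ν.real A| ≤ Real.exp C - 1 := by
  set p : α → ℝ := fun x ↦ Real.exp (h x) / ∫ y, Real.exp (h y) ∂ν
  have hp : ∀ᵐ x ∂ν, |p x - 1| ≤ Real.exp C - 1 :=
    hosc.mono fun x hx ↦ abs_exp_div_integral_exp_sub_one_le hh hx
  have hC : 0 ≤ Real.exp C - 1 := by
    obtain ⟨x, hx⟩ := hp.exists
    exact (abs_nonneg _).trans hx
  have hp_int : Integrable p ν := by
    have hsub : Integrable (fun x ↦ p x - 1) ν :=
      (integrable_const (Real.exp C - 1)).mono'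
        ((hh.exp.div_const _).sub_const 1).aestronglyMeasurable hp
    simpa only [Pi.add_def, sub_add_cancel] using hsub.add (integrable_const (1 : ℝ))
  have hdiff : (ν.tilted h).real A - ν.real A = ∫ x in A, (p x - 1) ∂ν := by
    rw [integral_sub hp_int.integrableOn (integrable_const 1), setIntegral_const, smul_eq_mul,
      mul_one, measureReal_def, tilted_apply_eq_ofReal_integral, ENNReal.toReal_ofReal]
    exact integral_nonneg fun x ↦ by positivity
  calc |(ν.tilted h).real A - ν.real A|
      ≤ (Real.exp C - 1) * ν.real A := by
        rw [hdiff, ← Real.norm_eq_abs]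
        exact norm_setIntegral_le_of_norm_le_const_ae (measure_lt_top ν A) (ae_restrict_of_ae hp)
    _ ≤ Real.exp C - 1 := mul_le_of_le_one_right hC measureReal_le_one

lemma prod_tilted_tilted {μ : Measure α} {ν : Measure β} [SFinite μ] [SFinite ν]
    {f : α → ℝ} {g : β → ℝ} (hf : AEMeasurable f μ) (hg : AEMeasurable g ν) :
    (μ.tilted f).prod (ν.tilted g) = (μ.prod ν).tilted fun x ↦ f x.1 + g x.2 := by
  have hZ : ∫ x, Real.exp (f x.1 + g x.2) ∂μ.prod ν
      = (∫ a, Real.exp (f a) ∂μ) * ∫ b, Real.exp (g b) ∂ν := by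
    simp only [Real.exp_add]
    exact integral_prod_mul (fun a ↦ Real.exp (f a)) fun b ↦ Real.exp (g b)
  simp only [Measure.tilted]
  rw [prod_withDensity₀ (hf.exp.div_const _).ennreal_ofReal (hg.exp.div_const _).ennreal_ofReal]
  congr 1 with x
  rw [hZ, ← ENNReal.ofReal_mul (by positivity), div_mul_div_comm, Real.exp_add]

end Tilted

section OrderedConfigs

variable {n : ℕ} {I J : Set ℝ}

/-- The set `(Iⁿ)↑` of strictly increasing `n`-tuples with all components in `I`. -/
def orderedConfigs (n : ℕ) (I : Set ℝ) : Set (Fin n → ℝ) :=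
  {w | StrictMono w ∧ ∀ i, w i ∈ I}

lemma orderedConfigs_mono (h : I ⊆ J) : orderedConfigs n I ⊆ orderedConfigs n J :=
  fun _ hw ↦ ⟨hw.1, fun i ↦ h (hw.2 i)⟩

lemma orderedConfigs_subset_pi : orderedConfigs n I ⊆ Set.univ.pi fun _ ↦ I :=
  fun _ hw i _ ↦ hw.2 i

lemma isOpen_setOf_strictMono {ι α : Type*} [Finite ι] [Preorder ι] [LinearOrder α]
    [TopologicalSpace α] [OrderClosedTopology α] : IsOpen {w : ι → α | StrictMono w} := by
  simp only [StrictMono, Set.ofPred_forall]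
  exact isOpen_iInter_of_finite fun i ↦ isOpen_iInter_of_finite fun j ↦
    isOpen_iInter_of_finite fun _ ↦ isOpen_lt (continuous_apply i) (continuous_apply j)

lemma isOpen_orderedConfigs (hI : IsOpen I) : IsOpen (orderedConfigs n I) := by
  convert isOpen_setOf_strictMono.inter (isOpen_set_pi Set.finite_univ fun (_ : Fin n) _ ↦ hI)
  ext w
  simp [orderedConfigs]

lemma measurableSet_orderedConfigs (hI : MeasurableSet I) :
    MeasurableSet (orderedConfigs n I) := by
  convert isOpen_setOf_strictMono.measurableSet.inter
    (MeasurableSet.univ_pi fun _ : Fin n ↦ hI)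
  ext w
  simp [orderedConfigs]

lemma orderedConfigs_nonempty (hI : I.Infinite) : (orderedConfigs n I).Nonempty := by
  obtain ⟨t, htI, ht⟩ := hI.exists_subset_card_eq n
  exact ⟨t.orderEmbOfFin ht, (t.orderEmbOfFin ht).strictMono,
    fun i ↦ htI (t.orderEmbOfFin_mem ht i)⟩

lemma volume_orderedConfigs_ne_zero (hI : (interior I).Nonempty) :
    volume (orderedConfigs n I) ≠ 0 := by
  obtain ⟨x, hx⟩ := hI
  have hinf : (interior I).Infinite := infinite_of_mem_nhds x (isOpen_interior.mem_nhds hx)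
  have hpos := (isOpen_orderedConfigs (n := n) isOpen_interior).measure_pos volume
    (orderedConfigs_nonempty hinf)
  exact (hpos.trans_le (measure_mono (orderedConfigs_mono interior_subset))).ne'

end OrderedConfigs

section CouplingRemainder

lemma abs_log_sub_log_le {d u v : ℝ} (hd : 0 < d) (hu : d ≤ |u|) (hv : d ≤ |v|) :
    |Real.log u - Real.log v| ≤ |u - v| / d := by
  wlog huv : |v| ≤ |u| generalizing u v
  · rw [abs_sub_comm, abs_sub_comm u]
    exact this hv hu (le_of_not_ge huv)
  have hu0 : 0 < |u| := hd.trans_le hu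
  have hv0 : 0 < |v| := hd.trans_le hv
  rw [← Real.log_abs u, ← Real.log_abs v,
    abs_of_nonneg (sub_nonneg.2 (Real.log_le_log hv0 huv)), ← Real.log_div hu0.ne' hv0.ne']
  calc Real.log (|u| / |v|) ≤ |u| / |v| - 1 := Real.log_le_sub_one_of_pos (div_pos hu0 hv0)
    _ = (|u| - |v|) / |v| := div_sub_one hv0.ne'
    _ ≤ |u - v| / d := by
        gcongr
        exact abs_sub_abs_le_abs_sub u v

lemma abs_log_sq_sub_sub_log_sq_sub_le {d s t s' t' : ℝ} (hd : 0 < d) (hst : d ≤ |s - t|)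
    (hst' : d ≤ |s' - t'|) :
    |Real.log ((s - t) ^ 2) - Real.log ((s' - t') ^ 2)| ≤ 2 * (|s - s'| + |t - t'|) / d := by
  have htri : |(s - t) - (s' - t')| ≤ |s - s'| + |t - t'| := by
    rw [sub_sub_sub_comm]
    exact abs_sub _ _
  rw [Real.log_pow, Real.log_pow, ← mul_sub, abs_mul, Nat.cast_ofNat, abs_two, mul_div_assoc]
  gcongr
  exact (abs_log_sub_log_le hd hst hst').trans (by gcongr)

variable {N n : ℕ}

lemma twoClusterHam_eq_add_couplingR (hN : N ≠ 0) (y : Fin (N - 2 * n) → ℝ)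
    (z₁ z₂ : Fin n → ℝ) (x : (Fin n → ℝ) × (Fin n → ℝ)) :
    twoClusterHam N n y x = oneClusterHam N n y z₂ x.1 + oneClusterHam N n y z₁ x.2
      + couplingR n (z₁, z₂) x := by
  unfold twoClusterHam oneClusterHam couplingR
  simp only [Finset.sum_add_distrib]
  rw [Finset.sum_comm (f := fun k i ↦ Real.log ((x.1 i - z₂ k) ^ 2)),
    Finset.sum_comm (f := fun k i ↦ Real.log ((x.2 i - z₁ k) ^ 2))]
  field_simp
  ring

@[fun_prop]
lemma measurable_couplingR (z : (Fin n → ℝ) × (Fin n → ℝ)) : Measurable (couplingR n z) := by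
  unfold couplingR
  fun_prop

lemma couplingR_sub_couplingR (z x x' : (Fin n → ℝ) × (Fin n → ℝ)) :
    couplingR n z x - couplingR n z x' = ∑ i, ∑ k,
      ((Real.log ((x.1 i - z.2 k) ^ 2) - Real.log ((x'.1 i - z.2 k) ^ 2))
        + (Real.log ((z.1 k - x.2 i) ^ 2) - Real.log ((z.1 k - x'.2 i) ^ 2))
        - (Real.log ((x.1 i - x.2 k) ^ 2) - Real.log ((x'.1 i - x'.2 k) ^ 2))) := by
  unfold couplingR
  simp only [Finset.sum_add_distrib, Finset.sum_sub_distrib, sub_sq_comm (z.1 _)]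
  ring

lemma abs_couplingR_sub_couplingR_le {ℓ d : ℝ} (hd : 0 < d) {I₁ I₂ : Set ℝ}
    (hI₁ : ∀ s ∈ I₁, ∀ t ∈ I₁, |s - t| ≤ ℓ) (hI₂ : ∀ s ∈ I₂, ∀ t ∈ I₂, |s - t| ≤ ℓ)
    (hdist : ∀ s ∈ I₁, ∀ t ∈ I₂, d ≤ |s - t|) {z x x' : (Fin n → ℝ) × (Fin n → ℝ)}
    (hz₁ : ∀ i, z.1 i ∈ I₁) (hz₂ : ∀ i, z.2 i ∈ I₂)
    (hx₁ : ∀ i, x.1 i ∈ I₁) (hx₂ : ∀ i, x.2 i ∈ I₂)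
    (hx₁' : ∀ i, x'.1 i ∈ I₁) (hx₂' : ∀ i, x'.2 i ∈ I₂) :
    |couplingR n z x - couplingR n z x'| ≤ 8 * n ^ 2 * ℓ / d := by
  have hlog : ∀ s ∈ I₁, ∀ t ∈ I₂, ∀ s' ∈ I₁, ∀ t' ∈ I₂,
      |Real.log ((s - t) ^ 2) - Real.log ((s' - t') ^ 2)| ≤ 2 * (|s - s'| + |t - t'|) / d :=
    fun s hs t ht s' hs' t' ht' ↦
      abs_log_sq_sub_sub_log_sq_sub_le hd (hdist s hs t ht) (hdist s' hs' t' ht')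
  have hterm (i k : Fin n) :
      |(Real.log ((x.1 i - z.2 k) ^ 2) - Real.log ((x'.1 i - z.2 k) ^ 2))
        + (Real.log ((z.1 k - x.2 i) ^ 2) - Real.log ((z.1 k - x'.2 i) ^ 2))
        - (Real.log ((x.1 i - x.2 k) ^ 2) - Real.log ((x'.1 i - x'.2 k) ^ 2))|
        ≤ 8 * ℓ / d := by
    have hfirst := hlog _ (hx₁ i) _ (hz₂ k) _ (hx₁' i) _ (hz₂ k)
    have hsecond := hlog _ (hz₁ k) _ (hx₂ i) _ (hz₁ k) _ (hx₂' i)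
    have hcross := hlog _ (hx₁ i) _ (hx₂ k) _ (hx₁' i) _ (hx₂' k)
    rw [sub_self, abs_zero] at hfirst hsecond
    refine (abs_sub _ _).trans ((add_le_add ((abs_add_le _ _).trans
      (add_le_add hfirst hsecond)) hcross).trans ?_)
    rw [← add_div, ← add_div]
    gcongr
    linarith [hI₁ _ (hx₁ i) _ (hx₁' i), hI₂ _ (hx₂ i) _ (hx₂' i), hI₂ _ (hx₂ k) _ (hx₂' k)]
  rw [couplingR_sub_couplingR]
  calc _ ≤ ∑ _i : Fin n, ∑ _k : Fin n, 8 * ℓ / d :=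
        (Finset.abs_sum_le_sum_abs _ _).trans <| Finset.sum_le_sum fun i _ ↦
          (Finset.abs_sum_le_sum_abs _ _).trans <| Finset.sum_le_sum fun k _ ↦ hterm i k
    _ = 8 * n ^ 2 * ℓ / d := by
        simp only [Finset.sum_const, Finset.card_univ, Fintype.card_fin, nsmul_eq_mul]
        ring

end CouplingRemainder

section GibbsMeasures

variable {N n : ℕ}

@[fun_prop]
lemma measurable_oneClusterHam (y : Fin (N - 2 * n) → ℝ) (z : Fin n → ℝ) :
    Measurable (oneClusterHam N n y z) := by
  unfold oneClusterHam
  fun_prop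

lemma integrableOn_exp_neg_oneClusterHam (y : Fin (N - 2 * n) → ℝ) (z : Fin n → ℝ)
    {S : Set (Fin n → ℝ)} (hS : Bornology.IsBounded S) :
    IntegrableOn (fun w ↦ Real.exp (-oneClusterHam N n y z w)) S := by
  set G : (Fin n → ℝ) → ℝ := fun w ↦ (N : ℝ) * ((1 / N) * ∑ i, ∑ j ∈ Finset.Ioi i, (w i - w j) ^ 2
    + (1 / N) * ∑ k, ∑ i, (w i - y k) ^ 2 + (1 / N) * ∑ k, ∑ i, (w i - z k) ^ 2
    - (1 / 2) * ∑ i, w i ^ 2)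
  have hG : Continuous G := by fun_prop
  have hle (w : Fin n → ℝ) : -oneClusterHam N n y z w ≤ G w := by
    calc -oneClusterHam N n y z w
        = (N : ℝ) * ((1 / N) * ∑ i, ∑ j ∈ Finset.Ioi i, Real.log ((w i - w j) ^ 2)
          + (1 / N) * ∑ k, ∑ i, Real.log ((w i - y k) ^ 2)
          + (1 / N) * ∑ k, ∑ i, Real.log ((w i - z k) ^ 2) - (1 / 2) * ∑ i, w i ^ 2) := by
          unfold oneClusterHam
          ring
      _ ≤ G w := by
          simp only [G]
          gcongr <;> exact Real.log_le_self (sq_nonneg _)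
  have hdom : IntegrableOn (fun w ↦ Real.exp (G w)) S :=
    (hG.rexp.continuousOn.integrableOn_compact hS.isCompact_closure).mono_set subset_closure
  refine hdom.mono' (by fun_prop) (Filter.Eventually.of_forall fun w ↦ ?_)
  rw [Real.norm_eq_abs, Real.abs_exp]
  exact Real.exp_le_exp.2 (hle w)

lemma isProbabilityMeasure_tilted_neg_oneClusterHam (y : Fin (N - 2 * n) → ℝ) (z : Fin n → ℝ)
    {S : Set (Fin n → ℝ)} (hS : Bornology.IsBounded S) (hS0 : volume S ≠ 0) :
    IsProbabilityMeasure ((volume.restrict S).tilted fun w ↦ -oneClusterHam N n y z w) :=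
  have : NeZero (volume.restrict S) := ⟨mt Measure.restrict_eq_zero.1 hS0⟩
  isProbabilityMeasure_tilted (integrableOn_exp_neg_oneClusterHam y z hS)

lemma tilted_neg_twoClusterHam_eq (hN : N ≠ 0) (y : Fin (N - 2 * n) → ℝ) (z₁ z₂ : Fin n → ℝ)
    {S₁ S₂ : Set (Fin n → ℝ)} (hS₁ : Bornology.IsBounded S₁) (hS₂ : Bornology.IsBounded S₂) :
    (volume.restrict (S₁ ×ˢ S₂)).tilted (fun x ↦ -twoClusterHam N n y x)
      = (((volume.restrict S₁).tilted fun w ↦ -oneClusterHam N n y z₂ w).prod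
          ((volume.restrict S₂).tilted fun w ↦ -oneClusterHam N n y z₁ w)).tilted
        fun x ↦ -couplingR n (z₁, z₂) x := by
  have hint : Integrable (fun x : (Fin n → ℝ) × (Fin n → ℝ) ↦
      Real.exp (-oneClusterHam N n y z₂ x.1 + -oneClusterHam N n y z₁ x.2))
      ((volume.restrict S₁).prod (volume.restrict S₂)) := by
    simp only [Real.exp_add]
    exact (integrableOn_exp_neg_oneClusterHam y z₂ hS₁).mul_prod
      (integrableOn_exp_neg_oneClusterHam y z₁ hS₂)
  rw [prod_tilted_tilted (by fun_prop) (by fun_prop), tilted_tilted hint, Measure.prod_restrict,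
    Measure.volume_eq_prod]
  congr 1 with x
  rw [twoClusterHam_eq_add_couplingR hN y z₁ z₂, Pi.add_apply]
  ring

theorem two_cluster_gibbs_decoupling_general (hN : N ≠ 0) (y : Fin (N - 2 * n) → ℝ)
    {ℓ d : ℝ} (hd : 0 < d) {I₁ I₂ : Set ℝ}
    (hI₁ : ∀ s ∈ I₁, ∀ t ∈ I₁, |s - t| ≤ ℓ) (hI₂ : ∀ s ∈ I₂, ∀ t ∈ I₂, |s - t| ≤ ℓ)
    (hdist : ∀ s ∈ I₁, ∀ t ∈ I₂, d ≤ |s - t|)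
    {z₁ z₂ : Fin n → ℝ} (hz₁ : ∀ i, z₁ i ∈ I₁) (hz₂ : ∀ i, z₂ i ∈ I₂)
    {S₁ S₂ : Set (Fin n → ℝ)} (hS₁ : MeasurableSet S₁) (hS₂ : MeasurableSet S₂)
    (hSI₁ : S₁ ⊆ Set.univ.pi fun _ ↦ I₁) (hSI₂ : S₂ ⊆ Set.univ.pi fun _ ↦ I₂)
    (hS₁0 : volume S₁ ≠ 0) (hS₂0 : volume S₂ ≠ 0) (A : Set ((Fin n → ℝ) × (Fin n → ℝ))) :
    |((volume.restrict (S₁ ×ˢ S₂)).tilted fun x ↦ -twoClusterHam N n y x).real A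
        - (((volume.restrict S₁).tilted fun w ↦ -oneClusterHam N n y z₂ w).prod
          ((volume.restrict S₂).tilted fun w ↦ -oneClusterHam N n y z₁ w)).real A|
      ≤ Real.exp (8 * n ^ 2 * ℓ / d) - 1 := by
  have hb₁ : Bornology.IsBounded S₁ :=
    (Bornology.IsBounded.pi fun _ ↦
      Metric.isBounded_iff.2 ⟨ℓ, fun s hs t ht ↦ hI₁ s hs t ht⟩).subset hSI₁
  have hb₂ : Bornology.IsBounded S₂ :=
    (Bornology.IsBounded.pi fun _ ↦
      Metric.isBounded_iff.2 ⟨ℓ, fun s hs t ht ↦ hI₂ s hs t ht⟩).subset hSI₂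
  have := isProbabilityMeasure_tilted_neg_oneClusterHam y z₂ hb₁ hS₁0
  have := isProbabilityMeasure_tilted_neg_oneClusterHam y z₁ hb₂ hS₂0
  rw [tilted_neg_twoClusterHam_eq hN y z₁ z₂ hb₁ hb₂]
  set ν := ((volume.restrict S₁).tilted fun w ↦ -oneClusterHam N n y z₂ w).prod
    ((volume.restrict S₂).tilted fun w ↦ -oneClusterHam N n y z₁ w)
  have hsupp : ∀ᵐ x ∂ν, x ∈ S₁ ×ˢ S₂ := by
    refine ((tilted_absolutelyContinuous _ _).prod (tilted_absolutelyContinuous _ _)).ae_le ?_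
    rw [Measure.prod_restrict]
    exact ae_restrict_mem (hS₁.prod hS₂)
  refine abs_real_tilted_sub_real_le (by fun_prop) ?_ A
  filter_upwards [hsupp] with x hx
  filter_upwards [hsupp] with x' hx'
  rw [neg_sub_neg, abs_sub_comm]
  exact abs_couplingR_sub_couplingR_le hd hI₁ hI₂ hdist hz₁ hz₂
    (fun i ↦ hSI₁ hx.1 i trivial) (fun i ↦ hSI₂ hx.2 i trivial)
    (fun i ↦ hSI₁ hx'.1 i trivial) (fun i ↦ hSI₂ hx'.2 i trivial)

end GibbsMeasures

/-- Asymptotic decoupling of the two-cluster conditional equilibrium measure: the conditional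
Gibbs measure of two eigenvalue clusters confined to two external gaps `I₁, I₂` of length at
most `ℓ` and at mutual distance at least `d` is within `exp(12n²ℓ/d) − 1` in total variation
of the product of the two decoupled one-cluster Gibbs measures. -/
theorem two_cluster_gibbs_decoupling (N n : ℕ) (hn : 2 * n < N)
    (y : Fin (N - 2 * n) → ℝ) (hy : StrictMono y)
    (L₁ L₂ : ℕ) (hL : L₁ < L₂) (hnL₂ : n ≤ L₂)
    (hL₁ : L₁ + 1 < N - 2 * n) (hL₂ : L₂ - n + 1 < N - 2 * n)
    (ℓ d : ℝ) (hd : 0 < d)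
    (I₁ I₂ : Set ℝ)
    (hI₁ : I₁ = Set.Icc (y ⟨L₁, Nat.lt_of_succ_lt hL₁⟩) (y ⟨L₁ + 1, hL₁⟩))
    (hI₂ : I₂ = Set.Icc (y ⟨L₂ - n, Nat.lt_of_succ_lt hL₂⟩) (y ⟨L₂ - n + 1, hL₂⟩))
    (hlen₁ : y ⟨L₁ + 1, hL₁⟩ - y ⟨L₁, Nat.lt_of_succ_lt hL₁⟩ ≤ ℓ)
    (hlen₂ : y ⟨L₂ - n + 1, hL₂⟩ - y ⟨L₂ - n, Nat.lt_of_succ_lt hL₂⟩ ≤ ℓ)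
    (hdist : ∀ s ∈ I₁, ∀ t ∈ I₂, d ≤ |s - t|)
    (z₁ z₂ : Fin n → ℝ)
    (hz₁ : StrictMono z₁ ∧ ∀ i, z₁ i ∈ I₁) (hz₂ : StrictMono z₂ ∧ ∀ i, z₂ i ∈ I₂)
    (S : Set ((Fin n → ℝ) × (Fin n → ℝ))) (S₁ S₂ : Set (Fin n → ℝ))
    (hS : S = {x | (StrictMono x.1 ∧ ∀ i, x.1 i ∈ I₁) ∧ StrictMono x.2 ∧ ∀ i, x.2 i ∈ I₂})
    (hS₁ : S₁ = {w | StrictMono w ∧ ∀ i, w i ∈ I₁})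
    (hS₂ : S₂ = {w | StrictMono w ∧ ∀ i, w i ∈ I₂})
    (μ : Measure ((Fin n → ℝ) × (Fin n → ℝ))) (μ₁ μ₂ : Measure (Fin n → ℝ))
    (hμ : μ = (volume.restrict S).withDensity fun x =>
      ENNReal.ofReal (Real.exp (-twoClusterHam N n y x)
        / ∫ x' in S, Real.exp (-twoClusterHam N n y x')))
    (hμ₁ : μ₁ = (volume.restrict S₁).withDensity fun w =>
      ENNReal.ofReal (Real.exp (-oneClusterHam N n y z₂ w)
        / ∫ w' in S₁, Real.exp (-oneClusterHam N n y z₂ w')))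
    (hμ₂ : μ₂ = (volume.restrict S₂).withDensity fun w =>
      ENNReal.ofReal (Real.exp (-oneClusterHam N n y z₁ w)
        / ∫ w' in S₂, Real.exp (-oneClusterHam N n y z₁ w'))) :
    ∀ A : Set ((Fin n → ℝ) × (Fin n → ℝ)), MeasurableSet A →
      |(μ A).toReal - ((μ₁.prod μ₂) A).toReal|
        ≤ Real.exp (12 * n ^ 2 * ℓ / d) - 1 := by
  intro A _
  subst hI₁ hI₂ hS hS₁ hS₂ hμ hμ₁ hμ₂
  have hgap₁ : y ⟨L₁, Nat.lt_of_succ_lt hL₁⟩ < y ⟨L₁ + 1, hL₁⟩ := hy (Nat.lt_succ_self L₁)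
  have hgap₂ : y ⟨L₂ - n, Nat.lt_of_succ_lt hL₂⟩ < y ⟨L₂ - n + 1, hL₂⟩ :=
    hy (Nat.lt_succ_self (L₂ - n))
  have hbound := two_cluster_gibbs_decoupling_general (Nat.ne_zero_of_lt hn) y hd
    (fun s hs t ht ↦ (Real.dist_le_of_mem_Icc hs ht).trans hlen₁)
    (fun s hs t ht ↦ (Real.dist_le_of_mem_Icc hs ht).trans hlen₂) hdist hz₁.2 hz₂.2
    (measurableSet_orderedConfigs measurableSet_Icc)
    (measurableSet_orderedConfigs measurableSet_Icc)
    orderedConfigs_subset_pi orderedConfigs_subset_pi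
    (volume_orderedConfigs_ne_zero (by rwa [interior_Icc, Set.nonempty_Ioo]))
    (volume_orderedConfigs_ne_zero (by rwa [interior_Icc, Set.nonempty_Ioo])) A
  have hℓ : 0 ≤ ℓ := (sub_pos.2 hgap₁).le.trans hlen₁
  exact hbound.trans (by gcongr; norm_num)
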